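/- Assume 0 < c_f < 1/(L₁ + 6) and b = (1 + c_f L₁)/2. Let Rev_j(p) = p·(1 − F_j(p)), let p_j* be a maximizer of Rev_j over [0, ∞), and set C̃ = ((1 − c_f L₁)/2)·c_f/(1 + (3/2)c_f)². Then C̃ > 0, and for every p ∈ [b, 1] with q = (p − b)/(1 − b) ∉ I_j, we have Rev_j(p_j*) − Rev_j(p) ≥ C̃·w_k^m. -/

import Mathlib

open Set MeasureTheory

/-- The basic mollifier `u₀(x) = exp(−1/(x(1/3 − x)))` on `(0, 1/3)`, `0` elsewhere. -/
noncomputable def u0 (x : ℝ) : ℝ :=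
  if x ∈ Set.Ioo (0 : ℝ) (1 / 3) then Real.exp (-(1 / (x * (1 / 3 - x)))) else 0

/-- The normalized primitive `u(x) = (∫₀^{1/3} u₀)⁻¹ · ∫_{−∞}^x u₀`. -/
noncomputable def uFn (x : ℝ) : ℝ :=
  (∫ t in (0 : ℝ)..(1 / 3), u0 t)⁻¹ * ∫ t in Set.Iic x, u0 t

/-- `L₁ = sup_x |u'(x)|`. -/
noncomputable def L1 : ℝ := ⨆ x : ℝ, |deriv uFn x|

/-- The bump function `B`. -/
noncomputable def bump (x : ℝ) : ℝ :=
  if x < 0 then 0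
  else if x ≤ 1 / 3 then uFn x
  else if x < 2 / 3 then 1
  else if x ≤ 1 then uFn (1 - x)
  else 0

/-- The bump function rescaled to the interval `[a, b]`. -/
noncomputable def bumpOn (a b x : ℝ) : ℝ := bump ((x - a) / (b - a))

/-- The interval widths: `w 0 = 1` and `w k = 3^(−k!)` for `k ≥ 1`. -/
noncomputable def wSeq : ℕ → ℝ := fun k => if k = 0 then 1 else (3 : ℝ) ^ (-(k.factorial : ℤ))

/-- `a, b : ℕ → ℝ` describe an admissible nested sequence of intervals:
`[a₀,b₀] = [0,1]` and `[a_{k+1}, b_{k+1}]` is a subinterval of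
`[a_k + w_k/3, b_k − w_k/3]` of length `w_{k+1}`. -/
def IsNestedTower (a b : ℕ → ℝ) : Prop :=
  a 0 = 0 ∧ b 0 = 1 ∧
  ∀ k : ℕ, a k + wSeq k / 3 ≤ a (k + 1) ∧ b (k + 1) ≤ b k - wSeq k / 3 ∧
    b (k + 1) - a (k + 1) = wSeq (k + 1)

/-- The bump tower `f(x) = c_f·Σ_{k=0}^∞ w_k^m·B_{[a_k,b_k]}(x)`. -/
noncomputable def towerFn (m : ℕ) (cf : ℝ) (a b : ℕ → ℝ) (x : ℝ) : ℝ :=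
  cf * ∑' k : ℕ, wSeq k ^ m * bumpOn (a k) (b k) x

/-- `g = f/(1+f)`, the normalization of a nonnegative function `f` to `[0,1)`. -/
noncomputable def gFn (f : ℝ → ℝ) (x : ℝ) : ℝ := f x / (1 + f x)

/-- The noise distribution function built from `f` with parameter `β`. -/
noncomputable def cdfF (f : ℝ → ℝ) (β : ℝ) (x : ℝ) : ℝ :=
  if x < β then 0
  else if x ≤ 1 then 1 - β / x - (1 - β) / x * gFn f ((x - β) / (1 - β))
  else if x ≤ 1 + β then 2 - (1 + β) / x
  else 1

/-!
On `[β, 1]` the distribution is designed so that the revenue is affine in `g`: selling at `p`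
earns `β + (1 - β) g(q)` with `q = (p - β) / (1 - β)`. A point `q` outside the level-`k` interval
sees only the bumps of levels below `k`, while an interior point of the level-`(k + 1)` interval
sees the plateaus of all levels up to `k`, so `f` is larger there by at least `c_f w_k ^ m`. Since
`0 ≤ f ≤ 3 / 2 c_f`, passing to `f / (1 + f)` shrinks this gap by at most the factor
`(1 + 3 / 2 c_f) ^ 2`.
-/

lemma L1_nonneg : 0 ≤ L1 := Real.iSup_nonneg fun _ => abs_nonneg _

lemma half_one_add_mul_L1_mem_Ioo {cf : ℝ} (hcf : 0 < cf) (hcf' : cf < 1 / (L1 + 6)) :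
    (1 + cf * L1) / 2 ∈ Ioo 0 1 := by
  have hL := L1_nonneg
  have hlt : cf * (L1 + 6) < 1 := (lt_div_iff₀ (by linarith)).1 hcf'
  have hnonneg : 0 ≤ cf * L1 := mul_nonneg hcf.le hL
  constructor <;> linarith

lemma u0_nonneg (x : ℝ) : 0 ≤ u0 x := by
  unfold u0
  split_ifs <;> positivity

lemma u0_le_one (x : ℝ) : u0 x ≤ 1 := by
  unfold u0
  split_ifs with hx
  · have : 0 < x * (1 / 3 - x) := mul_pos hx.1 (sub_pos.2 hx.2)
    exact Real.exp_le_one_iff.2 (neg_nonpos.2 (by positivity))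
  · exact zero_le_one

lemma measurable_u0 : Measurable u0 :=
  Measurable.ite measurableSet_Ioo (by fun_prop) measurable_const

lemma support_u0_subset : Function.support u0 ⊆ Ioc 0 (1 / 3) := fun _ hx =>
  Ioo_subset_Ioc_self (by_contra fun h => hx (if_neg h))

lemma integrable_u0 : Integrable u0 := by
  rw [← integrableOn_iff_integrable_of_support_subset support_u0_subset]
  refine Measure.integrableOn_of_bounded (M := 1) (by simp) measurable_u0.aestronglyMeasurable ?_
  exact .of_forall fun x => (Real.norm_of_nonneg (u0_nonneg x)).trans_le (u0_le_one x)

lemma uFn_eq (x : ℝ) : uFn x = (∫ t, u0 t)⁻¹ * ∫ t in Iic x, u0 t := by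
  rw [uFn, intervalIntegral.integral_eq_integral_of_support_subset support_u0_subset]

lemma uFn_nonneg (x : ℝ) : 0 ≤ uFn x := by
  rw [uFn_eq]
  exact mul_nonneg (inv_nonneg.2 (integral_nonneg u0_nonneg)) (integral_nonneg u0_nonneg)

lemma uFn_le_one (x : ℝ) : uFn x ≤ 1 := by
  have hle : ∫ t in Iic x, u0 t ≤ ∫ t, u0 t :=
    setIntegral_le_integral integrable_u0 (.of_forall u0_nonneg)
  calc uFn x = (∫ t, u0 t)⁻¹ * ∫ t in Iic x, u0 t := uFn_eq x
    _ ≤ (∫ t, u0 t)⁻¹ * ∫ t, u0 t :=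
      mul_le_mul_of_nonneg_left hle (inv_nonneg.2 (integral_nonneg u0_nonneg))
    _ ≤ 1 := inv_mul_le_one

lemma bump_nonneg (x : ℝ) : 0 ≤ bump x := by
  unfold bump
  split_ifs <;> first | exact uFn_nonneg _ | norm_num

lemma bump_le_one (x : ℝ) : bump x ≤ 1 := by
  unfold bump
  split_ifs <;> first | exact uFn_le_one _ | norm_num

lemma bump_of_notMem_Icc {x : ℝ} (hx : x ∉ Icc 0 1) : bump x = 0 := by
  unfold bump
  split_ifs <;> first | rfl | (exfalso; grind)

lemma bump_of_mem_Ioo {x : ℝ} (hx : x ∈ Ioo (1 / 3) (2 / 3)) : bump x = 1 := by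
  unfold bump
  split_ifs <;> first | rfl | (exfalso; grind)

lemma bumpOn_of_notMem_Icc {a b x : ℝ} (hab : a < b) (hx : x ∉ Icc a b) : bumpOn a b x = 0 := by
  refine bump_of_notMem_Icc fun h => hx ?_
  rw [mem_Icc, le_div_iff₀ (sub_pos.2 hab), div_le_iff₀ (sub_pos.2 hab)] at h
  constructor <;> linarith

lemma bumpOn_of_mem_Ioo {a b x : ℝ} (hab : a < b)
    (hx : x ∈ Ioo (a + (b - a) / 3) (b - (b - a) / 3)) : bumpOn a b x = 1 := by
  refine bump_of_mem_Ioo ?_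
  rw [mem_Ioo, lt_div_iff₀ (sub_pos.2 hab), div_lt_iff₀ (sub_pos.2 hab)]
  constructor <;> linarith [hx.1, hx.2]

lemma wSeq_pos (k : ℕ) : 0 < wSeq k := by
  unfold wSeq
  split_ifs <;> positivity

lemma wSeq_le (k : ℕ) : wSeq k ≤ (1 / 3) ^ k := by
  unfold wSeq
  split_ifs with hk
  · simp [hk]
  · rw [zpow_neg, zpow_natCast, one_div, inv_pow]
    exact inv_anti₀ (by positivity) (pow_le_pow_right₀ (by norm_num) k.self_le_factorial)

lemma wSeq_pow_le {m : ℕ} (hm : m ≠ 0) (k : ℕ) : wSeq k ^ m ≤ (1 / 3) ^ k :=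
  have hle_one : wSeq k ≤ 1 := (wSeq_le k).trans (pow_le_one₀ (by norm_num) (by norm_num))
  (pow_le_of_le_one (wSeq_pos k).le hle_one hm).trans (wSeq_le k)

lemma div_sq_le_gFn_sub_gFn {f : ℝ → ℝ} {x y M : ℝ} (hy : 0 ≤ f y) (hyx : f y ≤ f x)
    (hx : f x ≤ M) : (f x - f y) / (1 + M) ^ 2 ≤ gFn f x - gFn f y := by
  have hfx : 0 < 1 + f x := by linarith
  have hfy : 0 < 1 + f y := by linarith
  calc (f x - f y) / (1 + M) ^ 2 ≤ (f x - f y) / ((1 + f x) * (1 + f y)) := by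
        refine div_le_div_of_nonneg_left (sub_nonneg.2 hyx) (mul_pos hfx hfy) ?_
        rw [sq]
        gcongr <;> linarith
    _ = gFn f x - gFn f y := by
        rw [gFn, gFn, div_sub_div _ _ hfx.ne' hfy.ne']
        ring

section Tower

variable {m : ℕ} {cf : ℝ} {a b : ℕ → ℝ} {k : ℕ} {x : ℝ}

lemma wSeq_pow_mul_bumpOn_nonneg (m : ℕ) (a b : ℕ → ℝ) (x : ℝ) (i : ℕ) :
    0 ≤ wSeq i ^ m * bumpOn (a i) (b i) x :=
  mul_nonneg (pow_nonneg (wSeq_pos i).le m) (bump_nonneg _)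

lemma wSeq_pow_mul_bumpOn_le_wSeq_pow (m : ℕ) (a b : ℕ → ℝ) (x : ℝ) (i : ℕ) :
    wSeq i ^ m * bumpOn (a i) (b i) x ≤ wSeq i ^ m :=
  mul_le_of_le_one_right (pow_nonneg (wSeq_pos i).le m) (bump_le_one _)

lemma wSeq_pow_mul_bumpOn_le_geometric (hm : m ≠ 0) (a b : ℕ → ℝ) (x : ℝ) (i : ℕ) :
    wSeq i ^ m * bumpOn (a i) (b i) x ≤ (1 / 3) ^ i :=
  (wSeq_pow_mul_bumpOn_le_wSeq_pow m a b x i).trans (wSeq_pow_le hm i)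

lemma summable_wSeq_pow_mul_bumpOn (hm : m ≠ 0) (a b : ℕ → ℝ) (x : ℝ) :
    Summable fun i => wSeq i ^ m * bumpOn (a i) (b i) x :=
  .of_nonneg_of_le (wSeq_pow_mul_bumpOn_nonneg m a b x) (wSeq_pow_mul_bumpOn_le_geometric hm a b x)
    (summable_geometric_of_lt_one (by norm_num) (by norm_num))

lemma towerFn_nonneg (hcf : 0 ≤ cf) (m : ℕ) (a b : ℕ → ℝ) (x : ℝ) : 0 ≤ towerFn m cf a b x :=
  mul_nonneg hcf (tsum_nonneg (wSeq_pow_mul_bumpOn_nonneg m a b x))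

lemma towerFn_le (hm : m ≠ 0) (hcf : 0 ≤ cf) (a b : ℕ → ℝ) (x : ℝ) :
    towerFn m cf a b x ≤ 3 / 2 * cf := by
  have hgeom : HasSum (fun i : ℕ => (1 / 3 : ℝ) ^ i) (3 / 2) := by
    convert hasSum_geometric_of_lt_one (r := (1 / 3 : ℝ)) (by norm_num) (by norm_num) using 1
    norm_num
  have hsum : ∑' i, wSeq i ^ m * bumpOn (a i) (b i) x ≤ 3 / 2 :=
    hasSum_le (wSeq_pow_mul_bumpOn_le_geometric hm a b x)
      (summable_wSeq_pow_mul_bumpOn hm a b x).hasSum hgeom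
  calc towerFn m cf a b x ≤ cf * (3 / 2) := mul_le_mul_of_nonneg_left hsum hcf
    _ = 3 / 2 * cf := mul_comm _ _

namespace IsNestedTower

lemma length_eq (h : IsNestedTower a b) (k : ℕ) : b k - a k = wSeq k := by
  obtain ⟨ha, hb, hsucc⟩ := h
  cases k with
  | zero => simp [ha, hb, wSeq]
  | succ n => exact (hsucc n).2.2

lemma left_lt_right (h : IsNestedTower a b) (k : ℕ) : a k < b k :=
  sub_pos.1 (h.length_eq k ▸ wSeq_pos k)

lemma monotone_left (h : IsNestedTower a b) : Monotone a :=
  monotone_nat_of_le_succ fun n => by linarith [(h.2.2 n).1, wSeq_pos n]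

lemma antitone_right (h : IsNestedTower a b) : Antitone b :=
  antitone_nat_of_succ_le fun n => by linarith [(h.2.2 n).2.1, wSeq_pos n]

lemma antitone_Icc (h : IsNestedTower a b) : Antitone fun k => Icc (a k) (b k) :=
  fun _ _ hij => Icc_subset_Icc (h.monotone_left hij) (h.antitone_right hij)

lemma Icc_subset_Icc_zero_one (h : IsNestedTower a b) (k : ℕ) : Icc (a k) (b k) ⊆ Icc 0 1 := by
  simpa only [h.1, h.2.1] using h.antitone_Icc k.zero_le

lemma bumpOn_eq_zero (h : IsNestedTower a b) (hx : x ∉ Icc (a k) (b k)) {i : ℕ} (hi : k ≤ i) :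
    bumpOn (a i) (b i) x = 0 :=
  bumpOn_of_notMem_Icc (h.left_lt_right i) fun hxi => hx (h.antitone_Icc hi hxi)

lemma bumpOn_eq_one (h : IsNestedTower a b) (hx : x ∈ Ioo (a k) (b k)) {i : ℕ} (hi : i < k) :
    bumpOn (a i) (b i) x = 1 := by
  refine bumpOn_of_mem_Ioo (h.left_lt_right i) ?_
  obtain ⟨hleft, hright, -⟩ := h.2.2 i
  rw [h.length_eq]
  exact ⟨(hleft.trans (h.monotone_left hi)).trans_lt hx.1,
    hx.2.trans_le ((h.antitone_right hi).trans hright)⟩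

lemma towerFn_le_of_notMem_Icc (h : IsNestedTower a b) (m : ℕ) (hcf : 0 ≤ cf)
    (hx : x ∉ Icc (a k) (b k)) :
    towerFn m cf a b x ≤ cf * ∑ i ∈ Finset.range k, wSeq i ^ m := by
  refine mul_le_mul_of_nonneg_left ?_ hcf
  rw [tsum_eq_sum (s := Finset.range k) fun i hi => by
    rw [h.bumpOn_eq_zero hx (by simpa using hi), mul_zero]]
  exact Finset.sum_le_sum fun i _ => wSeq_pow_mul_bumpOn_le_wSeq_pow m a b x i

lemma le_towerFn_of_mem_Ioo (h : IsNestedTower a b) (hm : m ≠ 0) (hcf : 0 ≤ cf)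
    (hx : x ∈ Ioo (a k) (b k)) :
    cf * ∑ i ∈ Finset.range k, wSeq i ^ m ≤ towerFn m cf a b x := by
  refine mul_le_mul_of_nonneg_left ?_ hcf
  calc ∑ i ∈ Finset.range k, wSeq i ^ m
      = ∑ i ∈ Finset.range k, wSeq i ^ m * bumpOn (a i) (b i) x :=
        Finset.sum_congr rfl fun i hi => by
          rw [h.bumpOn_eq_one hx (Finset.mem_range.1 hi), mul_one]
    _ ≤ ∑' i, wSeq i ^ m * bumpOn (a i) (b i) x :=
        (summable_wSeq_pow_mul_bumpOn hm a b x).sum_le_tsum _ fun i _ =>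
          wSeq_pow_mul_bumpOn_nonneg m a b x i

lemma le_towerFn_sub_towerFn (h : IsNestedTower a b) (hm : m ≠ 0) (hcf : 0 ≤ cf)
    (hx : x ∈ Ioo (a (k + 1)) (b (k + 1))) {y : ℝ} (hy : y ∉ Icc (a k) (b k)) :
    cf * wSeq k ^ m ≤ towerFn m cf a b x - towerFn m cf a b y := by
  have hlower := h.le_towerFn_of_mem_Ioo hm hcf hx
  have hupper := h.towerFn_le_of_notMem_Icc m hcf hy
  rw [Finset.sum_range_succ, mul_add] at hlower
  linarith

lemma le_gFn_sub_gFn (h : IsNestedTower a b) (hm : m ≠ 0) (hcf : 0 ≤ cf)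
    (hx : x ∈ Ioo (a (k + 1)) (b (k + 1))) {y : ℝ} (hy : y ∉ Icc (a k) (b k)) :
    cf / (1 + 3 / 2 * cf) ^ 2 * wSeq k ^ m ≤
      gFn (towerFn m cf a b) x - gFn (towerFn m cf a b) y := by
  have hgap := h.le_towerFn_sub_towerFn hm hcf hx hy
  have hgap_nonneg : 0 ≤ cf * wSeq k ^ m := mul_nonneg hcf (pow_nonneg (wSeq_pos k).le m)
  calc cf / (1 + 3 / 2 * cf) ^ 2 * wSeq k ^ m = cf * wSeq k ^ m / (1 + 3 / 2 * cf) ^ 2 := by ring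
    _ ≤ (towerFn m cf a b x - towerFn m cf a b y) / (1 + 3 / 2 * cf) ^ 2 := by gcongr
    _ ≤ gFn (towerFn m cf a b) x - gFn (towerFn m cf a b) y :=
        div_sq_le_gFn_sub_gFn (towerFn_nonneg hcf m a b y) (by linarith)
          (towerFn_le hm hcf a b x)

end IsNestedTower

end Tower

/-- The expected revenue `p (1 - F(p))` from posting the price `p` to a buyer whose valuation has
distribution function `F`. -/
noncomputable def revenue (F : ℝ → ℝ) (p : ℝ) : ℝ := p * (1 - F p)

lemma revenue_cdfF (f : ℝ → ℝ) {β p : ℝ} (hβ : 0 < β) (hp : p ∈ Icc β 1) :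
    revenue (cdfF f β) p = β + (1 - β) * gFn f ((p - β) / (1 - β)) := by
  have hp0 : p ≠ 0 := (hβ.trans_le hp.1).ne'
  rw [revenue, cdfF, if_neg hp.1.not_gt, if_pos hp.2]
  field

lemma le_revenue_sub_revenue {f : ℝ → ℝ} {β pstar p x : ℝ} (hβ : β ∈ Ioo 0 1)
    (hpstar : IsMaxOn (revenue (cdfF f β)) (Icc β 1) pstar) (hp : p ∈ Icc β 1)
    (hx : x ∈ Icc 0 1) :
    (1 - β) * (gFn f x - gFn f ((p - β) / (1 - β))) ≤
      revenue (cdfF f β) pstar - revenue (cdfF f β) p := by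
  have hβ1 : 0 < 1 - β := sub_pos.2 hβ.2
  have hprice : β + (1 - β) * x ∈ Icc β 1 := by
    constructor <;> nlinarith [hx.1, hx.2]
  have hquantile : (β + (1 - β) * x - β) / (1 - β) = x := by
    rw [add_sub_cancel_left, mul_div_cancel_left₀ x hβ1.ne']
  have hmax := isMaxOn_iff.1 hpstar _ hprice
  rw [revenue_cdfF f hβ.1 hprice, hquantile] at hmax
  rw [revenue_cdfF f hβ.1 hp]
  linarith

theorem revenue_gap_general {m : ℕ} (hm : m ≠ 0) {cf : ℝ} (hcf : 0 < cf) (k : ℕ)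
    {a b : ℕ → ℝ} (hab : IsNestedTower a b) {β : ℝ} (hβ : β ∈ Ioo 0 1) {pstar : ℝ}
    (hpstar : IsMaxOn (revenue (cdfF (towerFn m cf a b) β)) (Icc β 1) pstar) :
    0 < (1 - β) * (cf / (1 + 3 / 2 * cf) ^ 2) ∧
    ∀ p ∈ Icc β 1, (p - β) / (1 - β) ∉ Icc (a k) (b k) →
      (1 - β) * (cf / (1 + 3 / 2 * cf) ^ 2) * wSeq k ^ m ≤
        revenue (cdfF (towerFn m cf a b) β) pstar - revenue (cdfF (towerFn m cf a b) β) p := by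
  have hβ1 : 0 < 1 - β := sub_pos.2 hβ.2
  refine ⟨by positivity, fun p hp hq => ?_⟩
  obtain ⟨x, hx⟩ : (Ioo (a (k + 1)) (b (k + 1))).Nonempty :=
    nonempty_Ioo.2 (hab.left_lt_right (k + 1))
  rw [mul_assoc]
  exact (mul_le_mul_of_nonneg_left (hab.le_gFn_sub_gFn hm hcf.le hx hq) hβ1.le).trans
    (le_revenue_sub_revenue hβ hpstar hp
      (hab.Icc_subset_Icc_zero_one (k + 1) (Ioo_subset_Icc_self hx)))

/-- Revenue gap: if the posted price does not fall in the distinguished level-`k` cell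
`I_j = [a_k, b_k]` of the instance `F_j`, the instantaneous revenue loss is at least
`C̃·w_k^m`, where `C̃ = ((1 − c_f L₁)/2)·c_f/(1 + (3/2)c_f)² > 0`. -/
theorem revenue_gap (m : ℕ) (hm : 1 ≤ m) (cf : ℝ)
    (hcf : 0 < cf) (hcf' : cf < 1 / (L1 + 6))
    (k : ℕ) (hk : 3 ≤ k)
    (a b : ℕ → ℝ) (hab : IsNestedTower a b)
    (j : ℕ) (hj1 : 1 ≤ j) (hjQ : (j : ℝ) ≤ wSeq (k - 1) / (3 * wSeq k))
    (hak : a k = a (k - 1) + wSeq (k - 1) / 3 + ((j : ℝ) - 1) * wSeq k)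
    (β : ℝ) (hβ : β = (1 + cf * L1) / 2)
    (Revj : ℝ → ℝ) (hRevj : Revj = fun p => p * (1 - cdfF (towerFn m cf a b) β p))
    (pstar : ℝ) (hpstar0 : 0 ≤ pstar) (hpstar : ∀ p : ℝ, 0 ≤ p → Revj p ≤ Revj pstar)
    (Ctil : ℝ) (hCtil : Ctil = (1 - cf * L1) / 2 * (cf / (1 + 3 / 2 * cf) ^ 2)) :
    0 < Ctil ∧
    ∀ p ∈ Set.Icc β 1, (p - β) / (1 - β) ∉ Set.Icc (a k) (b k) →
      Ctil * wSeq k ^ m ≤ Revj pstar - Revj p := by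
  have hβ_mem : β ∈ Ioo 0 1 := hβ ▸ half_one_add_mul_L1_mem_Ioo hcf hcf'
  obtain rfl : Ctil = (1 - β) * (cf / (1 + 3 / 2 * cf) ^ 2) := by rw [hCtil, hβ]; ring
  subst hRevj
  exact revenue_gap_general (Nat.one_le_iff_ne_zero.1 hm) hcf k hab hβ_mem
    fun p hp => hpstar p (hβ_mem.1.le.trans hp.1)
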